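/- arXiv:2603.00860 — 4 statements merged into one kernel-verified Lean document; each statement's English description precedes it below -/
import Mathlib

section
/- Let m > 2·C₁·C₃ and take m_ℓ = m smoothing steps on every level. Under Assumptions (A1), (A2) and (A3) listed in the context, the multigrid V-cycle operators B_ℓ satisfy, for every level ℓ ≥ 1 and every λ ∈ V_ℓ, |a_ℓ((Id − B_ℓ A_ℓ)λ, λ)| ≤ δ · a_ℓ(λ, λ), where δ = C₁C₃ / (m − C₁C₃). -/
open scoped RealInnerProductSpace

/-!
Let `a` be the energy form, `T = 1 - S A` the smoothing error and `E = 1 - B A` the error operator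
of the V-cycle. With `y = T ^ m x`, self-adjointness of `T` and the Galerkin relation between `P`
and the prolongation `I` give
`a (E x) x = a (y - I P y) y + a_c (E_c P y) (P y)` and `a_c (P y) (P y) = a y y - a (y - I P y) y`,
where `c` marks the coarse level. If `E_c` contracts the energy by the factor `δ`, then
`|a (E x) x| ≤ (1 + δ) |a (y - I P y) y| + δ a y y`, and (A1) with (A3) bound the first absolute
value by `C₁ C₃ (a y y - a (T y) (T y))`.

The energies `a (T ^ j x) (T ^ j x)` form a convex sequence, so the energy lost in step `m + 1` is
at most the average loss `(a x x - a y y) / m` of the first `m` steps. The bound therefore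
reproduces itself on the fine level as soon as `(1 + δ) C₁ C₃ ≤ δ m`, and
`δ = C₁ C₃ / (m - C₁ C₃)` is the solution of the corresponding equation.
-/

namespace Multigrid

lemma nsmul_sub_succ_le_sub_of_antitone {G : Type*} [AddCommGroup G] [PartialOrder G]
    [IsOrderedAddMonoid G] {c : ℕ → G} (hc : Antitone fun j ↦ c j - c (j + 1)) (m : ℕ) :
    m • (c m - c (m + 1)) ≤ c 0 - c m := by
  have hsum := Finset.card_nsmul_le_sum (Finset.range m) (fun j ↦ c j - c (j + 1))
    (c m - c (m + 1)) fun j hj ↦ hc (Finset.mem_range.mp hj).le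
  rwa [Finset.card_range, Finset.sum_range_sub'] at hsum

lemma isSelfAdjoint_pow {R V : Type*} [CommSemiring R] [AddCommMonoid V] [Module R V]
    {a : LinearMap.BilinForm R V} {T : Module.End R V} (hT : a.IsSelfAdjoint T) (k : ℕ) :
    a.IsSelfAdjoint (T ^ k : Module.End R V) := by
  induction k with
  | zero => exact LinearMap.isAdjointPair_one
  | succ k ih =>
    have h := LinearMap.IsAdjointPair.mul ih hT
    rwa [← pow_succ, ← pow_succ'] at h

section Smoothing

variable {R V : Type*} [CommRing R] [PartialOrder R] [IsOrderedAddMonoid R]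
  [AddCommGroup V] [Module R V] {a : LinearMap.BilinForm R V} {T : Module.End R V}

lemma energy_decrement_le (ha : a.IsNonneg) (hT : a.IsSelfAdjoint T) (u : V) :
    a (T u) (T u) - a (T (T u)) (T (T u)) ≤ a u u - a (T u) (T u) := by
  have second_difference : a (u - T (T u)) (u - T (T u)) =
      a u u - a (T u) (T u) - (a (T u) (T u) - a (T (T u)) (T (T u))) := by
    simp only [map_sub, LinearMap.sub_apply]
    rw [hT (T u) u, ← hT u (T u)]
  exact sub_nonneg.mp (second_difference ▸ ha.nonneg _)

lemma antitone_energy_decrement (ha : a.IsNonneg) (hT : a.IsSelfAdjoint T) (x : V) :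
    Antitone fun j : ℕ ↦ a ((T ^ j) x) ((T ^ j) x) - a ((T ^ (j + 1)) x) ((T ^ (j + 1)) x) := by
  refine antitone_nat_of_succ_le fun j ↦ ?_
  simpa only [pow_succ', Module.End.mul_apply] using energy_decrement_le ha hT ((T ^ j) x)

lemma mul_energy_decrement_pow_le (ha : a.IsNonneg) (hT : a.IsSelfAdjoint T) (m : ℕ) (x : V) :
    m * (a ((T ^ m) x) ((T ^ m) x) - a (T ((T ^ m) x)) (T ((T ^ m) x))) ≤
      a x x - a ((T ^ m) x) ((T ^ m) x) := by
  simpa only [nsmul_eq_mul, pow_zero, Module.End.one_apply, pow_succ' T m, Module.End.mul_apply]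
    using nsmul_sub_succ_le_sub_of_antitone (antitone_energy_decrement ha hT x) m

end Smoothing

section TwoLevel

variable {R V W : Type*} [CommRing R] [AddCommGroup V] [Module R V] [AddCommGroup W] [Module R W]

/-- The error operator of a two-level cycle: `m` smoothing steps with error operator `T`, a coarse
correction along the prolongation `I`, and `m` further smoothing steps. The coarse problem is
solved with error operator `E`, so `E = 0` stands for the exact coarse solve. The restriction is
encoded through the Ritz projection `P`. -/
def twoLevelError (T : Module.End R V) (I : W →ₗ[R] V) (P : V →ₗ[R] W) (E : Module.End R W)
    (m : ℕ) : Module.End R V :=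
  T ^ m * (1 - I ∘ₗ (1 - E) ∘ₗ P) * T ^ m

variable {a : LinearMap.BilinForm R V} {b : LinearMap.BilinForm R W} {T : Module.End R V}
  {I : W →ₗ[R] V} {P : V →ₗ[R] W}

lemma apply_twoLevelError_self (hT : a.IsSelfAdjoint T) (hIP : LinearMap.IsAdjointPair b a I P)
    (E : Module.End R W) (m : ℕ) (x : V) :
    a (twoLevelError T I P E m x) x =
      a ((T ^ m) x - I (P ((T ^ m) x))) ((T ^ m) x) +
        b (E (P ((T ^ m) x))) (P ((T ^ m) x)) := by
  simp only [twoLevelError, Module.End.mul_apply]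
  rw [isSelfAdjoint_pow hT m, ← hIP]
  simp [sub_add]

lemma abs_apply_twoLevelError_self_le [LinearOrder R] [IsStrictOrderedRing R]
    (ha : a.IsNonneg) (hT : a.IsSelfAdjoint T) (hIP : LinearMap.IsAdjointPair b a I P)
    {C δ : R} (hC : 0 < C) (hδ : 0 ≤ δ)
    (happrox : ∀ y, |a (y - I (P y)) y| ≤ C * (a y y - a (T y) (T y)))
    {E : Module.End R W} (hE : ∀ w, |b (E w) w| ≤ δ * b w w)
    {m : ℕ} (hm : (1 + δ) * C ≤ δ * m) (x : V) :
    |a (twoLevelError T I P E m x) x| ≤ δ * a x x := by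
  rw [apply_twoLevelError_self hT hIP]
  have smoothing := mul_energy_decrement_pow_le ha hT m x
  set y := (T ^ m) x
  set X := a (y - I (P y)) y with hX
  set D := a y y - a (T y) (T y)
  have hD : 0 ≤ D := nonneg_of_mul_nonneg_right ((abs_nonneg X).trans (happrox y)) hC
  have coarse_energy : b (P y) (P y) = a y y - X := by
    rw [hX, map_sub, LinearMap.sub_apply, hIP, sub_sub_cancel]
  calc |X + b (E (P y)) (P y)|
      ≤ |X| + δ * (a y y - X) := (abs_add_le _ _).trans (by grw [hE, coarse_energy])
    _ ≤ |X| + δ * (a y y + |X|) := by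
        gcongr
        linarith [neg_abs_le X]
    _ = (1 + δ) * |X| + δ * a y y := by ring
    _ ≤ (1 + δ) * (C * D) + δ * a y y := by
        gcongr
        exact happrox y
    _ = (1 + δ) * C * D + δ * a y y := by ring
    _ ≤ δ * m * D + δ * a y y := by gcongr
    _ = δ * (m * D) + δ * a y y := by ring
    _ ≤ δ * (a x x - a y y) + δ * a y y := by gcongr
    _ = δ * a x x := by ring

end TwoLevel

section Energy

variable {E F : Type*} [NormedAddCommGroup E] [InnerProductSpace ℝ E]
  [NormedAddCommGroup F] [InnerProductSpace ℝ F]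

/-- The energy form `a(u, v) = ⟪A u, v⟫` of an operator `A`. -/
noncomputable def energyForm (A : Module.End ℝ E) : LinearMap.BilinForm ℝ E :=
  innerₗ E ∘ₗ A

@[simp]
lemma energyForm_apply (A : Module.End ℝ E) (u v : E) : energyForm A u v = ⟪A u, v⟫ := rfl

lemma isNonneg_energyForm {A : Module.End ℝ E} (hA : A.IsPositive) : (energyForm A).IsNonneg :=
  ⟨hA.inner_nonneg_left⟩

lemma isSelfAdjoint_energyForm_one_sub_mul {A S : Module.End ℝ E} (hA : A.IsSymmetric)
    (hS : S.IsSymmetric) : (energyForm A).IsSelfAdjoint (1 - S * A : Module.End ℝ E) := by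
  intro u v
  simp only [LinearMap.sub_apply, Module.End.one_apply, Module.End.mul_apply, map_sub,
    energyForm_apply]
  rw [hA (S (A u)) v, hS]

lemma isAdjointPair_energyForm_of_ritz {A : Module.End ℝ E} {A' : Module.End ℝ F}
    (hA : A.IsSymmetric) (hA' : A'.IsSymmetric) {I : E →ₗ[ℝ] F} {P : F →ₗ[ℝ] E}
    (hP : ∀ v u, ⟪A (P v), u⟫ = ⟪A' v, I u⟫) :
    LinearMap.IsAdjointPair (energyForm A) (energyForm A') I P := by
  intro u v
  rw [energyForm_apply, energyForm_apply, hA', real_inner_comm, ← hP, real_inner_comm, hA]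

lemma restriction_comp_eq_comp_ritz {A : Module.End ℝ E} {A' : Module.End ℝ F} {I : E →ₗ[ℝ] F}
    {Q P : F →ₗ[ℝ] E} (hQ : ∀ v u, ⟪Q v, u⟫ = ⟪v, I u⟫)
    (hP : ∀ v u, ⟪A (P v), u⟫ = ⟪A' v, I u⟫) : Q ∘ₗ A' = A ∘ₗ P := by
  ext v
  exact ext_inner_right ℝ fun u ↦ (hQ (A' v) u).trans (hP v u).symm

lemma inner_symmetrizedSmoother {A K T : Module.End ℝ E} (hA : A.IsSymmetric)
    (hT : (energyForm A).IsSelfAdjoint T) (hK : K * A = 1 - T ^ 2) (v : E) :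
    ⟪K (A v), A v⟫ = energyForm A v v - energyForm A (T v) (T v) := by
  calc ⟪K (A v), A v⟫ = energyForm A ((K * A) v) v := (hA _ _).symm
    _ = energyForm A v v - energyForm A (T (T v)) v := by simp [hK, pow_two]
    _ = energyForm A v v - energyForm A (T v) (T v) := by rw [hT]

lemma abs_energyForm_le_of_approximation_of_smoothing {A K T : Module.End ℝ E}
    (hA : A.IsSymmetric) (hT : (energyForm A).IsSelfAdjoint T) (hK : K * A = 1 - T ^ 2)
    {C₁ C₃ ω : ℝ} (hC₁ : 0 ≤ C₁) {u v : E} (happrox : |⟪A u, v⟫| ≤ C₁ * ‖A v‖ ^ 2 * ω)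
    (hsmooth : ∀ w, ⟪w, w⟫ * ω ≤ C₃ * ⟪K w, w⟫) :
    |energyForm A u v| ≤ C₁ * C₃ * (energyForm A v v - energyForm A (T v) (T v)) := by
  calc |energyForm A u v| ≤ C₁ * (⟪A v, A v⟫ * ω) := by
        rwa [real_inner_self_eq_norm_sq, ← mul_assoc]
    _ ≤ C₁ * (C₃ * ⟪K (A v), A v⟫) := by grw [hsmooth]
    _ = C₁ * C₃ * (energyForm A v v - energyForm A (T v) (T v)) := by
        rw [inner_symmetrizedSmoother hA hT hK, mul_assoc]

end Energy

end Multigrid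

open Multigrid in
/-- The weight `ω ℓ` plays the role of `1 / λmax(A ℓ)`. -/
theorem multigrid_vcycle_contraction_general
    (L : ℕ) (V : ℕ → Type*)
    [∀ ℓ, NormedAddCommGroup (V ℓ)] [∀ ℓ, InnerProductSpace ℝ (V ℓ)]
    (A S K B : ∀ ℓ, Module.End ℝ (V ℓ))
    (Iprol : ∀ ℓ, V ℓ →ₗ[ℝ] V (ℓ + 1))
    (Ires P : ∀ ℓ, V (ℓ + 1) →ₗ[ℝ] V ℓ)
    (ω : ℕ → ℝ) (C₁ C₃ : ℝ) (hC₁ : 0 < C₁) (hC₃ : 0 < C₃)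
    (m : ℕ → ℕ) (M : ℝ) (hM : C₁ * C₃ < M) (hm : ∀ ℓ, ℓ + 1 ≤ L → M ≤ m (ℓ + 1))
    (hA : ∀ ℓ, ℓ ≤ L → (A ℓ).IsPositive)
    (hS : ∀ ℓ, 1 ≤ ℓ → ℓ ≤ L → (S ℓ).IsSymmetric)
    (hIres : ∀ ℓ, ℓ + 1 ≤ L → ∀ (v : V (ℓ + 1)) (w : V ℓ), ⟪Ires ℓ v, w⟫ = ⟪v, Iprol ℓ w⟫)
    (hP : ∀ ℓ, ℓ + 1 ≤ L → ∀ (v : V (ℓ + 1)) (w : V ℓ),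
      ⟪A ℓ (P ℓ v), w⟫ = ⟪A (ℓ + 1) v, Iprol ℓ w⟫)
    (hK : ∀ ℓ, 1 ≤ ℓ → ℓ ≤ L → K ℓ * A ℓ = 1 - (1 - S ℓ * A ℓ) ^ 2)
    (hB0 : B 0 * A 0 = 1)
    (hB : ∀ ℓ, ℓ + 1 ≤ L →
      (1 : Module.End ℝ (V (ℓ + 1))) - B (ℓ + 1) * A (ℓ + 1) =
        (1 - S (ℓ + 1) * A (ℓ + 1)) ^ m (ℓ + 1) *
          (1 - Iprol ℓ ∘ₗ B ℓ ∘ₗ Ires ℓ ∘ₗ A (ℓ + 1)) *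
        (1 - S (ℓ + 1) * A (ℓ + 1)) ^ m (ℓ + 1))
    (happrox : ∀ ℓ, ℓ + 1 ≤ L → ∀ v : V (ℓ + 1),
      |⟪A (ℓ + 1) (v - Iprol ℓ (P ℓ v)), v⟫| ≤ C₁ * ‖A (ℓ + 1) v‖ ^ 2 * ω (ℓ + 1))
    (hsmooth : ∀ ℓ, 1 ≤ ℓ → ℓ ≤ L → ∀ v : V ℓ, ⟪v, v⟫ * ω ℓ ≤ C₃ * ⟪K ℓ v, v⟫)
    (ℓ : ℕ) (hℓ : ℓ ≤ L) (v : V ℓ) :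
    |⟪A ℓ (v - B ℓ (A ℓ v)), v⟫| ≤ C₁ * C₃ / (M - C₁ * C₃) * ⟪A ℓ v, v⟫ := by
  have hMC : 0 < M - C₁ * C₃ := sub_pos.mpr hM
  set δ := C₁ * C₃ / (M - C₁ * C₃) with hδ_def
  have hδ : 0 ≤ δ := by positivity
  have fixed_point : (1 + δ) * (C₁ * C₃) = δ * M := by
    rw [hδ_def]
    field_simp
    ring
  change |energyForm (A ℓ) ((1 - B ℓ * A ℓ) v) v| ≤ δ * energyForm (A ℓ) v v
  induction ℓ with
  | zero =>
    rw [hB0, sub_self, LinearMap.zero_apply, map_zero, LinearMap.zero_apply, abs_zero]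
    exact mul_nonneg hδ ((hA 0 hℓ).inner_nonneg_left v)
  | succ ℓ ih =>
    have hA_symm := (hA (ℓ + 1) hℓ).isSymmetric
    have hAc_symm := (hA ℓ (by omega)).isSymmetric
    have hT := isSelfAdjoint_energyForm_one_sub_mul hA_symm (hS (ℓ + 1) (by omega) hℓ)
    have recursion : 1 - B (ℓ + 1) * A (ℓ + 1) = twoLevelError (1 - S (ℓ + 1) * A (ℓ + 1))
        (Iprol ℓ) (P ℓ) (1 - B ℓ * A ℓ) (m (ℓ + 1)) := by
      rw [hB ℓ hℓ, restriction_comp_eq_comp_ritz (hIres ℓ hℓ) (hP ℓ hℓ), twoLevelError,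
        sub_sub_cancel, Module.End.mul_eq_comp (B ℓ), LinearMap.comp_assoc]
    rw [recursion]
    refine abs_apply_twoLevelError_self_le (isNonneg_energyForm (hA (ℓ + 1) hℓ)) hT
      (isAdjointPair_energyForm_of_ritz hAc_symm hA_symm (hP ℓ hℓ)) (mul_pos hC₁ hC₃) hδ
      (fun y ↦ abs_energyForm_le_of_approximation_of_smoothing hA_symm hT
        (hK (ℓ + 1) (by omega) hℓ) hC₁.le (happrox ℓ hℓ y) (hsmooth (ℓ + 1) (by omega) hℓ))
      (ih (by omega)) ?_ v
    grw [fixed_point, hm ℓ hℓ]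

/-- uniform convergence of the multigrid V-cycle with a fixed number
`m > 2 C₁ C₃` of smoothing steps per level, under the regularity assumption (A1),
the boundedness assumption (A2) and the smoothing hypothesis (A3).
Levels are indexed by `ℕ`, with `Iprol ℓ : V ℓ → V (ℓ+1)` the prolongation from
level `ℓ` to level `ℓ+1` (so the paper's `I_ℓ` is `Iprol (ℓ-1)`), `Ires ℓ` its
adjoint, `P ℓ` the Ritz-type projection, and the energy form at level `ℓ` given by
`a_ℓ(u, v) = ⟪A ℓ u, v⟫`. -/
theorem multigrid_vcycle_contraction
    (L : ℕ) (V : ℕ → Type*)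
    [∀ ℓ, NormedAddCommGroup (V ℓ)] [∀ ℓ, InnerProductSpace ℝ (V ℓ)]
    [∀ ℓ, FiniteDimensional ℝ (V ℓ)] [∀ ℓ, Nontrivial (V ℓ)]
    (A S K B : ∀ ℓ, Module.End ℝ (V ℓ))
    (Iprol : ∀ ℓ, V ℓ →ₗ[ℝ] V (ℓ + 1))
    (Ires : ∀ ℓ, V (ℓ + 1) →ₗ[ℝ] V ℓ)
    (P : ∀ ℓ, V (ℓ + 1) →ₗ[ℝ] V ℓ)
    (lmax : ℕ → ℝ)
    (C₁ C₃ : ℝ) (hC₁ : 0 < C₁) (hC₃ : 0 < C₃)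
    (C₂ : ℝ) (hC₂ : 0 < C₂)
    (m : ℕ) (hm : 2 * C₁ * C₃ < (m : ℝ))
    -- each `A ℓ` is self-adjoint and positive definite
    (hA_sym : ∀ ℓ, ℓ ≤ L → ∀ u v : V ℓ, ⟪A ℓ u, v⟫ = ⟪u, A ℓ v⟫)
    (hA_pd : ∀ ℓ, ℓ ≤ L → ∀ u : V ℓ, u ≠ 0 → 0 < ⟪A ℓ u, u⟫)
    -- `lmax ℓ` is the largest eigenvalue of `A ℓ`
    (hlmax_eig : ∀ ℓ, ℓ ≤ L → Module.End.HasEigenvalue (A ℓ) (lmax ℓ))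
    (hlmax_max : ∀ ℓ, ℓ ≤ L → ∀ μ : ℝ, Module.End.HasEigenvalue (A ℓ) μ → μ ≤ lmax ℓ)
    -- the smoothers are self-adjoint
    (hS_sym : ∀ ℓ, 1 ≤ ℓ → ℓ ≤ L → ∀ u v : V ℓ, ⟪S ℓ u, v⟫ = ⟪u, S ℓ v⟫)
    -- `Ires ℓ` is the adjoint of the prolongation `Iprol ℓ`
    (hIres : ∀ ℓ, ℓ + 1 ≤ L → ∀ (v : V (ℓ + 1)) (w : V ℓ), ⟪Ires ℓ v, w⟫ = ⟪v, Iprol ℓ w⟫)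
    -- `P ℓ` is defined by `a_ℓ(P ℓ λ, μ) = a_{ℓ+1}(λ, Iprol ℓ μ)`
    (hP : ∀ ℓ, ℓ + 1 ≤ L → ∀ (lam : V (ℓ + 1)) (μ : V ℓ),
      ⟪A ℓ (P ℓ lam), μ⟫ = ⟪A (ℓ + 1) lam, Iprol ℓ μ⟫)
    -- the symmetrized smoother: `K ℓ ∘ A ℓ = Id - (Id - S ℓ A ℓ)²`
    (hK : ∀ ℓ, 1 ≤ ℓ → ℓ ≤ L → K ℓ * A ℓ = 1 - (1 - S ℓ * A ℓ) ^ 2)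
    -- the V-cycle recursion: `B 0 = (A 0)⁻¹` and
    -- `Id - B (ℓ+1) A (ℓ+1) = (Id - S A)^m (Id - Iprol ∘ B ℓ ∘ Ires ∘ A) (Id - S A)^m`
    (hB0 : B 0 * A 0 = 1) (hB0' : A 0 * B 0 = 1)
    (hB : ∀ ℓ, ℓ + 1 ≤ L →
      (1 : Module.End ℝ (V (ℓ + 1))) - B (ℓ + 1) * A (ℓ + 1) =
        (1 - S (ℓ + 1) * A (ℓ + 1)) ^ m *
          ((1 : Module.End ℝ (V (ℓ + 1))) -
            (Iprol ℓ ∘ₗ B ℓ ∘ₗ Ires ℓ ∘ₗ A (ℓ + 1) : Module.End ℝ (V (ℓ + 1)))) *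
        (1 - S (ℓ + 1) * A (ℓ + 1)) ^ m)
    -- Assumption (A1): regularity
    (hA1 : ∀ ℓ, ℓ + 1 ≤ L → ∀ lam : V (ℓ + 1),
      |⟪A (ℓ + 1) (lam - Iprol ℓ (P ℓ lam)), lam⟫| ≤
        C₁ * ‖A (ℓ + 1) lam‖ ^ 2 / lmax (ℓ + 1))
    -- Assumption (A2): boundedness of `Id - Iprol ∘ P`
    (hA2 : ∀ ℓ, ℓ + 1 ≤ L → ∀ lam : V (ℓ + 1),
      Real.sqrt ⟪A (ℓ + 1) (lam - Iprol ℓ (P ℓ lam)), lam - Iprol ℓ (P ℓ lam)⟫ ≤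
        C₂ * Real.sqrt ⟪A (ℓ + 1) lam, lam⟫)
    -- Assumption (A3): smoothing hypothesis
    (hA3_spec : ∀ ℓ, 1 ≤ ℓ → ℓ ≤ L →
      ∀ μ : ℝ, Module.End.HasEigenvalue ((1 : Module.End ℝ (V ℓ)) - S ℓ * A ℓ) μ → 0 < μ)
    (hA3 : ∀ ℓ, 1 ≤ ℓ → ℓ ≤ L → ∀ lam : V ℓ,
      ⟪lam, lam⟫ / lmax ℓ ≤ C₃ * ⟪K ℓ lam, lam⟫) :
    ∀ ℓ, 1 ≤ ℓ → ℓ ≤ L → ∀ lam : V ℓ,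
      |⟪A ℓ (lam - B ℓ (A ℓ lam)), lam⟫| ≤
        (C₁ * C₃ / ((m : ℝ) - C₁ * C₃)) * ⟪A ℓ lam, lam⟫ := by
  have hA : ∀ ℓ, ℓ ≤ L → (A ℓ).IsPositive := fun ℓ hℓ ↦ ⟨hA_sym ℓ hℓ, fun u ↦
    (eq_or_ne u 0).elim (fun hu ↦ by simp [hu]) fun hu ↦ (hA_pd ℓ hℓ u hu).le⟩
  have hm' : C₁ * C₃ < m := by linarith [mul_pos hC₁ hC₃]
  simp only [div_eq_mul_inv _ (lmax _)] at hA1 hA3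
  exact fun ℓ _ hℓ ↦ multigrid_vcycle_contraction_general L V A S K B Iprol Ires P
    (fun ℓ ↦ (lmax ℓ)⁻¹) C₁ C₃ hC₁ hC₃ (fun _ ↦ m) m hm' (fun _ _ ↦ le_rfl) hA hS_sym hIres hP hK
    hB0 hB hA1 hA3 ℓ hℓ
end

section
/- Let V be a finite-dimensional real inner product space, a a symmetric positive-definite bilinear form on V with associated operator A (⟨A u, v⟩ = a(u,v)) and largest eigenvalue λmax(A), and let N₁,…,N_n be subspaces of V with N₁ + ⋯ + N_n = V. Let S̃ := Σᵢ ιᵢ Aᵢ⁻¹ πᵢ be the associated parallel subspace correction (additive Schwarz) operator, let ω > 0, S := ω S̃, D := S̃ A, and K := (Id − (Id − S A)²) A⁻¹. Assume: (1) a(D λ, D λ) ≤ c₀ a(D λ, λ) for all λ ∈ V; (2) there are constants c₁, c₂, h > 0 with h⁻² ≤ c₂ λmax(A) such that every λ ∈ V admits a decomposition λ = Σᵢ λᵢ with λᵢ ∈ Nᵢ and Σᵢ a(λᵢ, λᵢ) ≤ c₁ h⁻² ⟨λ, λ⟩. Then, if 0 < ω < c₀⁻¹: (i) every eigenvalue of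 Id − S A is positive, and (ii) ⟨λ, λ⟩ / λmax(A) ≤ (c₁ c₂ / ω) ⟨K λ, λ⟩ for all λ ∈ V; that is, the smoother S fulfils the smoothing hypothesis with C₃ = c₁ c₂ / ω. -/
/-!
Both claims are estimates on `S` alone: after scaling, `T = S A` satisfies
`a(T λ, T λ) ≤ θ a(T λ, λ)` with `θ = ω c₀ < 1`. On an eigenvector of `T` this bounds the
eigenvalue by `θ`, so the eigenvalues of `Id - T` are at least `1 - θ > 0`.

For the smoothing bound, `K = 2 S - S A S` because `A` is invertible, so
`⟨K x, x⟩ = 2 ⟨S x, x⟩ - a(S x, S x) ≥ ⟨S x, x⟩`, by the interaction bound at `λ = A⁻¹ x`.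
It remains to compare `⟨S̃ x, x⟩ = ∑ a(Qᵢ x, Qᵢ x)` with `⟨x, x⟩ = ∑ a(Qᵢ x, xᵢ)`, where `x = ∑ xᵢ`
is a stable decomposition with constant `M`: expand `0 ≤ ∑ a(M Qᵢ x - xᵢ, M Qᵢ x - xᵢ)`.
-/

open scoped RealInnerProductSpace

section InteractionBound

/-- The interaction bound `a(T x, T x) ≤ c a(T x, x)` of an operator `T` in the energy form `a`.
It is used for the preconditioned operators `T = S̃ A` and `T = S A`. -/
def HasInteractionBound {R M : Type*} [CommSemiring R] [LE R] [AddCommMonoid M] [Module R M]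
    (a : M →ₗ[R] M →ₗ[R] R) (T : Module.End R M) (c : R) : Prop :=
  ∀ x, a (T x) (T x) ≤ c * a (T x) x

namespace HasInteractionBound

variable {R M : Type*} [CommRing R] [LinearOrder R] [IsStrictOrderedRing R] [AddCommGroup M]
  [Module R M] {a : M →ₗ[R] M →ₗ[R] R} {T : Module.End R M} {c : R}

theorem smul (hT : HasInteractionBound a T c) (r : R) :
    HasInteractionBound a (r • T) (r * c) := fun x => by
  simpa [pow_two, mul_assoc, mul_left_comm] using mul_le_mul_of_nonneg_left (hT x) (sq_nonneg r)

theorem eigenvalue_le (hT : HasInteractionBound a T c) (ha : ∀ x, x ≠ 0 → 0 < a x x)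
    (hc : 0 ≤ c) {d : R} (hd : T.HasEigenvalue d) : d ≤ c := by
  obtain ⟨v, hv⟩ := hd.exists_hasEigenvector
  have h_quad : d * d ≤ c * d := by
    have h := hT v
    simp only [hv.apply_eq_smul, map_smul, LinearMap.smul_apply, smul_eq_mul, ← mul_assoc] at h
    exact le_of_mul_le_mul_right h (ha v hv.2)
  exact le_of_not_gt fun hcd =>
    h_quad.not_gt (mul_lt_mul_of_pos_right hcd (hc.trans_lt hcd))

theorem pos_of_hasEigenvalue_one_sub (hT : HasInteractionBound a T c)
    (ha : ∀ x, x ≠ 0 → 0 < a x x) (hc₀ : 0 ≤ c) (hc₁ : c < 1) {μ : R}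
    (hμ : Module.End.HasEigenvalue (1 - T) μ) : 0 < μ := by
  have hT_eig : T.HasEigenvalue (1 - μ) :=
    Module.End.hasEigenvalue_sub'_iff.1 (by simpa [Module.End.one_eq_id] using hμ)
  linarith [hT.eigenvalue_le ha hc₀ hT_eig]

end HasInteractionBound

end InteractionBound

section SubspaceCorrection

variable {V : Type*} [NormedAddCommGroup V] [InnerProductSpace ℝ V]

/-- `Q` is the local solution operator `ι A_N⁻¹ π` of the subspace `N` for the energy form `a`,
characterized by its variational equation so that neither `A_N⁻¹` nor `π` has to be constructed. -/
structure IsSubspaceCorrection (a : V →ₗ[ℝ] V →ₗ[ℝ] ℝ) (N : Submodule ℝ V)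
    (Q : Module.End ℝ V) : Prop where
  mem (x : V) : Q x ∈ N
  apply_eq_inner (x : V) {v : V} (hv : v ∈ N) : a (Q x) v = ⟪x, v⟫

/-- Every `x` splits as `∑ yᵢ` with `yᵢ ∈ Nᵢ` and total energy at most `M ⟪x, x⟫`. This is the
stability condition on the family `N` from which a lower bound on the subspace correction
operator is obtained. -/
def HasStableDecomposition {ι : Type*} [Fintype ι] (a : V →ₗ[ℝ] V →ₗ[ℝ] ℝ)
    (N : ι → Submodule ℝ V) (M : ℝ) : Prop :=
  ∀ x : V, ∃ y : ι → V, (∀ i, y i ∈ N i) ∧ (∑ i, y i) = x ∧ (∑ i, a (y i) (y i)) ≤ M * ⟪x, x⟫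

variable {a : V →ₗ[ℝ] V →ₗ[ℝ] ℝ}

theorem HasStableDecomposition.mono {ι : Type*} [Fintype ι] {N : ι → Submodule ℝ V} {M M' : ℝ}
    (hN : HasStableDecomposition a N M) (hM : M ≤ M') : HasStableDecomposition a N M' := fun x =>
  let ⟨y, hyN, hysum, hy⟩ := hN x
  ⟨y, hyN, hysum, hy.trans (mul_le_mul_of_nonneg_right hM real_inner_self_nonneg)⟩

namespace IsSubspaceCorrection

theorem inner_apply_left {N : Submodule ℝ V} {Q : Module.End ℝ V}
    (hQ : IsSubspaceCorrection a N Q) (x y : V) : ⟪Q x, y⟫ = a (Q y) (Q x) := by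
  rw [real_inner_comm, hQ.apply_eq_inner y (hQ.mem x)]

theorem isPositive {N : Submodule ℝ V} {Q : Module.End ℝ V} (hQ : IsSubspaceCorrection a N Q)
    (ha : a.IsPosSemidef) : Q.IsPositive := by
  refine Q.isPositive_iff.2 ⟨fun x y => ?_, fun x => ?_⟩
  · rw [real_inner_comm (Q y) x, hQ.inner_apply_left, hQ.inner_apply_left]
    exact ha.eq (Q y) (Q x)
  · rw [hQ.inner_apply_left]
    exact ha.nonneg (Q x)

theorem inner_self_le_mul_inner_sum_apply_self {ι : Type*} [Fintype ι] {N : ι → Submodule ℝ V}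
    {Q : ι → Module.End ℝ V} (hQ : ∀ i, IsSubspaceCorrection a (N i) (Q i))
    (ha : a.IsPosSemidef) {M : ℝ} (hM : 0 < M) (hN : HasStableDecomposition a N M) (x : V) :
    ⟪x, x⟫ ≤ M * ⟪(∑ i, Q i) x, x⟫ := by
  obtain ⟨y, hyN, hysum, hy⟩ := hN x
  have h_inner : ⟪x, x⟫ = ∑ i, a (Q i x) (y i) := by
    simp only [(hQ _).apply_eq_inner x (hyN _), ← inner_sum, hysum]
  have h_energy : ⟪(∑ i, Q i) x, x⟫ = ∑ i, a (Q i x) (Q i x) := by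
    simp only [LinearMap.sum_apply, sum_inner, (hQ _).inner_apply_left]
  have h_expand (p q : V) : a (M • p - q) (M • p - q) = M ^ 2 * a p p - 2 * M * a p q + a q q := by
    have h_symm : a q p = a p q := ha.eq q p
    simp only [map_sub, map_smul, LinearMap.sub_apply, LinearMap.smul_apply, smul_eq_mul, h_symm]
    ring
  have h_nonneg : 0 ≤ M ^ 2 * ⟪(∑ i, Q i) x, x⟫ - 2 * M * ⟪x, x⟫ + ∑ i, a (y i) (y i) := by
    rw [h_energy, h_inner, Finset.mul_sum, Finset.mul_sum, ← Finset.sum_sub_distrib,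
      ← Finset.sum_add_distrib]
    exact Finset.sum_nonneg fun i _ => h_expand (Q i x) (y i) ▸ ha.nonneg _
  refine le_of_mul_le_mul_left ?_ hM
  linarith

end IsSubspaceCorrection

end SubspaceCorrection

section SymmetrizedSmoother

theorem injective_of_inner_map_self_ne_zero {𝕜 E : Type*} [RCLike 𝕜] [NormedAddCommGroup E]
    [InnerProductSpace 𝕜 E] {T : E →ₗ[𝕜] E} (hT : ∀ x, x ≠ 0 → inner 𝕜 (T x) x ≠ 0) :
    Function.Injective T :=
  (injective_iff_map_eq_zero T).2 fun x hx => by_contra fun hne => hT x hne (by simp [hx])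

theorem eq_two_mul_sub_of_mul_eq_one_sub_sq {R : Type*} [Ring R] {A S K : R}
    (hA : IsRightRegular A) (hK : K * A = 1 - (1 - S * A) ^ 2) : K = 2 * S - S * A * S :=
  hA (by simp only [hK]; noncomm_ring)

variable {V : Type*} [NormedAddCommGroup V] [InnerProductSpace ℝ V] {a : V →ₗ[ℝ] V →ₗ[ℝ] ℝ}
  {A S K : Module.End ℝ V}

theorem inner_symmetrized_apply_self (hA : Function.Surjective A) (hS : S.IsSymmetric)
    (hK : K * A = 1 - (1 - S * A) ^ 2) (x : V) :
    ⟪K x, x⟫ = 2 * ⟪S x, x⟫ - ⟪A (S x), S x⟫ := by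
  have hA_reg : IsRightRegular A := fun _ _ h => (LinearMap.cancel_right hA).1 h
  rw [eq_two_mul_sub_of_mul_eq_one_sub_sq hA_reg hK, two_mul, LinearMap.sub_apply,
    LinearMap.add_apply, Module.End.mul_apply, Module.End.mul_apply, inner_sub_left,
    inner_add_left, hS (A (S x)) x]
  ring

theorem HasInteractionBound.inner_apply_self_le {c : ℝ} (hT : HasInteractionBound a (S * A) c)
    (ha : a.IsSymm) (hA : ∀ u v : V, ⟪A u, v⟫ = a u v) (hA_surj : Function.Surjective A) (x : V) :
    ⟪A (S x), S x⟫ ≤ c * ⟪S x, x⟫ := by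
  obtain ⟨w, rfl⟩ := hA_surj x
  have h_symm : a (S (A w)) w = ⟪S (A w), A w⟫ := by
    rw [real_inner_comm, hA]
    exact ha.eq (S (A w)) w
  simpa only [Module.End.mul_apply, ← hA (S (A w)) (S (A w)), h_symm] using hT w

theorem HasInteractionBound.inner_apply_self_le_inner_symmetrized {c : ℝ}
    (hT : HasInteractionBound a (S * A) c) (hc : c ≤ 1) (ha : a.IsSymm)
    (hA : ∀ u v : V, ⟪A u, v⟫ = a u v) (hA_surj : Function.Surjective A) (hS : S.IsPositive)
    (hK : K * A = 1 - (1 - S * A) ^ 2) (x : V) : ⟪S x, x⟫ ≤ ⟪K x, x⟫ := by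
  have h_energy : ⟪A (S x), S x⟫ ≤ ⟪S x, x⟫ :=
    (hT.inner_apply_self_le ha hA hA_surj x).trans
      (mul_le_of_le_one_left (hS.inner_nonneg_left x) hc)
  linarith [inner_symmetrized_apply_self hA_surj hS.isSymmetric hK x]

end SymmetrizedSmoother

theorem patch_smoother_smoothing_hypothesis_general
    {V : Type*} [NormedAddCommGroup V] [InnerProductSpace ℝ V] {ι : Type*} [Fintype ι]
    {a : V →ₗ[ℝ] V →ₗ[ℝ] ℝ} (ha_symm : a.IsSymm) (ha_pd : ∀ u : V, u ≠ 0 → 0 < a u u)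
    {A : Module.End ℝ V} (hA : ∀ u v : V, ⟪A u, v⟫ = a u v) (hA_surj : Function.Surjective A)
    {N : ι → Submodule ℝ V} {Q : ι → Module.End ℝ V}
    (hQ : ∀ i, IsSubspaceCorrection a (N i) (Q i)) {ω : ℝ} (hω : 0 < ω)
    {S : Module.End ℝ V} (hS : S = ω • ∑ i, Q i)
    {K : Module.End ℝ V} (hK : K * A = 1 - (1 - S * A) ^ 2)
    {c₀ : ℝ} (hD : HasInteractionBound a ((∑ i, Q i) * A) c₀) (hωc : ω < c₀⁻¹)
    {M : ℝ} (hM : 0 < M) (hN : HasStableDecomposition a N M) :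
    (∀ μ : ℝ, Module.End.HasEigenvalue (1 - S * A) μ → 0 < μ) ∧
    (∀ x : V, ω * ⟪x, x⟫ ≤ M * ⟪K x, x⟫) := by
  have hc₀ : 0 < c₀ := inv_pos.1 (hω.trans hωc)
  have hθ : ω * c₀ < 1 := (lt_inv_mul_iff₀' hc₀).1 (by simpa using hωc)
  have ha : a.IsPosSemidef :=
    ⟨ha_symm, ⟨fun u => (eq_or_ne u 0).elim (by rintro rfl; simp) fun hu => (ha_pd u hu).le⟩⟩
  have hS_pos : S.IsPositive := hS ▸
    (LinearMap.isPositive_sum _ fun i _ => (hQ i).isPositive ha).smul_of_nonneg hω.le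
  have hT : HasInteractionBound a (S * A) (ω * c₀) := by
    simpa only [hS, smul_mul_assoc] using hD.smul ω
  refine ⟨fun μ => hT.pos_of_hasEigenvalue_one_sub ha_pd (by positivity) hθ, fun x => ?_⟩
  calc ω * ⟪x, x⟫ ≤ ω * (M * ⟪(∑ i, Q i) x, x⟫) := by
        gcongr
        exact IsSubspaceCorrection.inner_self_le_mul_inner_sum_apply_self hQ ha hM hN x
    _ = M * ⟪S x, x⟫ := by
        rw [hS, LinearMap.smul_apply, real_inner_smul_left, mul_left_comm]
    _ ≤ M * ⟪K x, x⟫ := by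
        gcongr
        exact hT.inner_apply_self_le_inner_symmetrized hθ.le ha_symm hA hA_surj hS_pos hK x

/-- the parallel subspace correction (additive Schwarz) smoother
`S = ω S̃` fulfils the smoothing hypothesis with `C₃ = c₁ c₂ / ω`, provided
`0 < ω < c₀⁻¹`, the interaction bound `a(Dλ, Dλ) ≤ c₀ a(Dλ, λ)` with `D = S̃ A`,
and a stable decomposition with constant `c₁ h⁻²`, `h⁻² ≤ c₂ λmax(A)`.
Each summand `Qᵢ = ιᵢ Aᵢ⁻¹ πᵢ` of `S̃` is characterized by `Qᵢ x ∈ Nᵢ` and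
`a(Qᵢ x, v) = ⟨x, v⟩` for `v ∈ Nᵢ`; the symmetrized smoother `K` is characterized
by `K A = Id - (Id - S A)²`. -/
theorem patch_smoother_smoothing_hypothesis
    {V : Type*} [NormedAddCommGroup V] [InnerProductSpace ℝ V] [FiniteDimensional ℝ V]
    {n : ℕ}
    (a : V →ₗ[ℝ] V →ₗ[ℝ] ℝ)
    (ha_symm : ∀ u v : V, a u v = a v u)
    (ha_pd : ∀ u : V, u ≠ 0 → 0 < a u u)
    (A : Module.End ℝ V)
    (hA : ∀ u v : V, ⟪A u, v⟫ = a u v)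
    (lmax : ℝ)
    (hlmax_eig : Module.End.HasEigenvalue A lmax)
    (hlmax_max : ∀ μ : ℝ, Module.End.HasEigenvalue A μ → μ ≤ lmax)
    (N : Fin n → Submodule ℝ V)
    (hN : (⨆ i, N i) = ⊤)
    (Q : Fin n → Module.End ℝ V)
    (hQmem : ∀ i (x : V), Q i x ∈ N i)
    (hQ : ∀ i (x v : V), v ∈ N i → a (Q i x) v = ⟪x, v⟫)
    (St : Module.End ℝ V) (hSt : St = ∑ i, Q i)
    (ω : ℝ) (hω0 : 0 < ω)
    (S : Module.End ℝ V) (hS : S = ω • St)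
    (K : Module.End ℝ V) (hK : K * A = 1 - (1 - S * A) ^ 2)
    (c₀ : ℝ) (hc₀ : 0 < c₀)
    (h1 : ∀ lam : V, a (St (A lam)) (St (A lam)) ≤ c₀ * a (St (A lam)) lam)
    (c₁ c₂ h : ℝ) (hc₁ : 0 < c₁) (hc₂ : 0 < c₂) (hh : 0 < h)
    (hmesh : (h ^ 2)⁻¹ ≤ c₂ * lmax)
    (hdecomp : ∀ lam : V, ∃ y : Fin n → V, (∀ i, y i ∈ N i) ∧ (∑ i, y i) = lam ∧
      (∑ i, a (y i) (y i)) ≤ c₁ * (h ^ 2)⁻¹ * ⟪lam, lam⟫)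
    (hωc : ω < c₀⁻¹) :
    (∀ μ : ℝ, Module.End.HasEigenvalue (1 - S * A) μ → 0 < μ) ∧
    (∀ lam : V, ⟪lam, lam⟫ / lmax ≤ (c₁ * c₂ / ω) * ⟪K lam, lam⟫) := by
  have hlmax : 0 < lmax := pos_of_mul_pos_right (lt_of_lt_of_le (by positivity) hmesh) hc₂.le
  have hM : c₁ * (h ^ 2)⁻¹ ≤ c₁ * c₂ * lmax := by
    rw [mul_assoc]
    gcongr
  have hA_surj : Function.Surjective A := LinearMap.surjective_of_injective <|
    injective_of_inner_map_self_ne_zero fun u hu => (hA u u).symm ▸ (ha_pd u hu).ne'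
  subst hSt
  obtain ⟨h_eig, h_smooth⟩ := patch_smoother_smoothing_hypothesis_general ⟨ha_symm⟩ ha_pd hA hA_surj
    (fun i => ⟨hQmem i, fun x v => hQ i x v⟩) hω0 hS hK h1 hωc (by positivity)
    (HasStableDecomposition.mono hdecomp hM)
  refine ⟨h_eig, fun lam => ?_⟩
  rw [div_mul_eq_mul_div, div_le_div_iff₀ hlmax hω0]
  linarith [h_smooth lam]
end

section
/- Let V be a finite-dimensional real inner product space, a a symmetric positive-definite bilinear form on V, N₁,…,N_n subspaces of V with N₁ + ⋯ + N_n = V, and S̃ := Σᵢ ιᵢ Aᵢ⁻¹ πᵢ the associated parallel subspace correction (additive Schwarz) operator. Suppose there is a constant c > 0 such that every λ ∈ V admits a decomposition λ = Σᵢ λᵢ with λᵢ ∈ Nᵢ and Σᵢ a(λᵢ, λᵢ) ≤ c ⟨λ, λ⟩. Then ⟨S̃ λ, λ⟩ ≥ c⁻¹ ⟨λ, λ⟩ for all λ ∈ V. -/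
open scoped RealInnerProductSpace

/-!
The Cauchy–Schwarz inequality for `a` on each `N i`, followed by the one for finite sums, gives
`⟨x, Σ yᵢ⟩² ≤ ⟨S̃ x, x⟩ · Σ a(yᵢ, yᵢ)` whenever `yᵢ ∈ N i`, because `a(Qᵢ x, Qᵢ x) = ⟨x, Qᵢ x⟩` and
`a(Qᵢ x, yᵢ) = ⟨x, yᵢ⟩`. For a stable decomposition `x = Σ yᵢ` the right-hand side is at most
`c ⟨S̃ x, x⟩ ⟨x, x⟩`, and a factor `⟨x, x⟩` cancels.
-/

section Semiring

variable {R M : Type*} [CommSemiring R] [AddCommMonoid M] [Module R M] {a : M →ₗ[R] M →ₗ[R] R}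

lemma isPosSemidef_of_isSymm_of_forall_pos [Preorder R] (hsymm : a.IsSymm)
    (hpos : ∀ u, u ≠ 0 → 0 < a u u) : a.IsPosSemidef :=
  LinearMap.isPosSemidef_def.2 ⟨hsymm, ⟨fun u ↦ by
    obtain rfl | hu := eq_or_ne u 0
    · simp
    · exact (hpos u hu).le⟩⟩

variable (a) in
/-- `q` is a Galerkin solution in the subspace `N` of the variational problem `a(q, v) = f(v)`.
For positive definite `a` and `f = ⟨x, ·⟩` this says that `q` is the subspace correction
`ι A⁻¹ π x`; stating it as a predicate on `q` avoids inverting the restriction of `a` to `N`. -/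
structure IsGalerkinSolution (N : Submodule R M) (f : Module.Dual R M) (q : M) : Prop where
  mem : q ∈ N
  apply_eq : ∀ v ∈ N, a q v = f v

namespace IsGalerkinSolution

variable {N : Submodule R M} {f : Module.Dual R M} {q : M}

lemma apply_self_eq (hq : IsGalerkinSolution a N f q) : a q q = f q :=
  hq.apply_eq q hq.mem

lemma nonneg [LE R] (hq : IsGalerkinSolution a N f q) (ha : a.IsNonneg) : 0 ≤ f q :=
  hq.apply_self_eq ▸ ha.nonneg q

end IsGalerkinSolution

end Semiring

namespace IsGalerkinSolution

section OrderedRing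

variable {R M ι : Type*} [CommRing R] [LinearOrder R] [IsStrictOrderedRing R] [AddCommGroup M]
  [Module R M] {a : M →ₗ[R] M →ₗ[R] R} {f : Module.Dual R M}

lemma apply_sq_le {N : Submodule R M} {q v : M} (hq : IsGalerkinSolution a N f q)
    (ha : a.IsPosSemidef) (hv : v ∈ N) : f v ^ 2 ≤ f q * a v v := by
  rw [← hq.apply_eq v hv, ← hq.apply_self_eq]
  exact LinearMap.BilinForm.apply_sq_le_of_symm a ha.nonneg ha.isSymm q v

lemma apply_sum_sq_le {s : Finset ι} {N : ι → Submodule R M} {q y : ι → M}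
    (hq : ∀ i ∈ s, IsGalerkinSolution a (N i) f (q i)) (ha : a.IsPosSemidef)
    (hy : ∀ i ∈ s, y i ∈ N i) :
    f (∑ i ∈ s, y i) ^ 2 ≤ f (∑ i ∈ s, q i) * ∑ i ∈ s, a (y i) (y i) := by
  rw [map_sum, map_sum]
  exact Finset.sum_sq_le_sum_mul_sum_of_sq_le_mul s (fun i hi ↦ (hq i hi).nonneg ha.isNonneg)
    (fun i _ ↦ ha.nonneg (y i)) fun i hi ↦ (hq i hi).apply_sq_le ha (hy i hi)

end OrderedRing

lemma inv_mul_apply_sum_le {K M ι : Type*} [Field K] [LinearOrder K] [IsStrictOrderedRing K]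
    [AddCommGroup M] [Module K M] {a : M →ₗ[K] M →ₗ[K] K} {f : Module.Dual K M} {s : Finset ι}
    {N : ι → Submodule K M} {q y : ι → M} {c : K}
    (hq : ∀ i ∈ s, IsGalerkinSolution a (N i) f (q i)) (ha : a.IsPosSemidef)
    (hy : ∀ i ∈ s, y i ∈ N i) (hc : 0 < c)
    (hstable : ∑ i ∈ s, a (y i) (y i) ≤ c * f (∑ i ∈ s, y i)) :
    c⁻¹ * f (∑ i ∈ s, y i) ≤ f (∑ i ∈ s, q i) := by
  have hq_nonneg : 0 ≤ f (∑ i ∈ s, q i) := by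
    rw [map_sum]
    exact Finset.sum_nonneg fun i hi ↦ (hq i hi).nonneg ha.isNonneg
  obtain hy_nonpos | hy_pos := le_or_gt (f (∑ i ∈ s, y i)) 0
  · exact (mul_nonpos_of_nonneg_of_nonpos (inv_nonneg.2 hc.le) hy_nonpos).trans hq_nonneg
  · rw [inv_mul_le_iff₀ hc]
    refine le_of_mul_le_mul_right ?_ hy_pos
    calc f (∑ i ∈ s, y i) * f (∑ i ∈ s, y i)
        = f (∑ i ∈ s, y i) ^ 2 := (sq _).symm
      _ ≤ f (∑ i ∈ s, q i) * ∑ i ∈ s, a (y i) (y i) := apply_sum_sq_le hq ha hy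
      _ ≤ f (∑ i ∈ s, q i) * (c * f (∑ i ∈ s, y i)) := by gcongr
      _ = c * f (∑ i ∈ s, q i) * f (∑ i ∈ s, y i) := by ring

end IsGalerkinSolution

theorem stable_decomposition_lower_bound_general {K M ι : Type*} [Field K] [LinearOrder K]
    [IsStrictOrderedRing K] [AddCommGroup M] [Module K M] [Fintype ι]
    {a b : M →ₗ[K] M →ₗ[K] K} (ha : a.IsPosSemidef) {N : ι → Submodule K M} {Q : ι → M → M}
    (hQ : ∀ i x, IsGalerkinSolution a (N i) (b x) (Q i x)) {c : K} (hc : 0 < c)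
    (hdecomp : ∀ x, ∃ y : ι → M, (∀ i, y i ∈ N i) ∧ ∑ i, y i = x ∧
      ∑ i, a (y i) (y i) ≤ c * b x x) (x : M) :
    c⁻¹ * b x x ≤ b x (∑ i, Q i x) := by
  obtain ⟨y, hy, hsum, hstable⟩ := hdecomp x
  have hlower := IsGalerkinSolution.inv_mul_apply_sum_le (s := Finset.univ) (fun i _ ↦ hQ i x) ha
    (fun i _ ↦ hy i) hc (hsum.symm ▸ hstable)
  rwa [hsum] at hlower

/-- a stable decomposition with constant `c` yields the lower bound
`⟨S̃ λ, λ⟩ ≥ c⁻¹ ⟨λ, λ⟩` for the parallel subspace correction operator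
`S̃ = Σᵢ ιᵢ Aᵢ⁻¹ πᵢ`.  Each summand `Qᵢ = ιᵢ Aᵢ⁻¹ πᵢ` is characterized by the
properties `Qᵢ x ∈ Nᵢ` and `a(Qᵢ x, v) = ⟨x, v⟩` for all `v ∈ Nᵢ`. -/
theorem stable_decomposition_lower_bound
    {V : Type*} [NormedAddCommGroup V] [InnerProductSpace ℝ V] [FiniteDimensional ℝ V]
    {n : ℕ}
    (a : V →ₗ[ℝ] V →ₗ[ℝ] ℝ)
    (ha_symm : ∀ u v : V, a u v = a v u)
    (ha_pd : ∀ u : V, u ≠ 0 → 0 < a u u)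
    (N : Fin n → Submodule ℝ V)
    (hN : (⨆ i, N i) = ⊤)
    (Q : Fin n → Module.End ℝ V)
    (hQmem : ∀ i (x : V), Q i x ∈ N i)
    (hQ : ∀ i (x v : V), v ∈ N i → a (Q i x) v = ⟪x, v⟫)
    (St : Module.End ℝ V) (hSt : St = ∑ i, Q i)
    (c : ℝ) (hc : 0 < c)
    (hdecomp : ∀ lam : V, ∃ y : Fin n → V, (∀ i, y i ∈ N i) ∧ (∑ i, y i) = lam ∧
      (∑ i, a (y i) (y i)) ≤ c * ⟪lam, lam⟫) :
    ∀ lam : V, c⁻¹ * ⟪lam, lam⟫ ≤ ⟪St lam, lam⟫ := by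
  intro lam
  rw [real_inner_comm lam (St lam), hSt, LinearMap.sum_apply]
  exact stable_decomposition_lower_bound_general (b := innerₗ V)
    (isPosSemidef_of_isSymm_of_forall_pos ⟨ha_symm⟩ ha_pd) (fun i x ↦ ⟨hQmem i x, hQ i x⟩) hc
    hdecomp lam
end

section
/- Let V be a finite-dimensional real inner product space, a a symmetric positive-definite bilinear form on V, N₁,…,N_n subspaces of V with N₁ + ⋯ + N_n = V, and S̃ := Σᵢ ιᵢ Aᵢ⁻¹ πᵢ the associated parallel subspace correction (additive Schwarz) operator (which is invertible). Then for every λ ∈ V, ⟨S̃⁻¹ λ, λ⟩ = min { Σᵢ a(λᵢ, λᵢ) : λᵢ ∈ Nᵢ for each i and Σᵢ λᵢ = λ }; i.e., the quadratic form of S̃⁻¹ equals the infimum of the summed energies over all subspace decompositions of λ, and this infimum is attained. -/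
/-!
Fix a functional `f` and let `uᵢ ∈ Nᵢ` solve `a(uᵢ, v) = f(v)` for all `v ∈ Nᵢ`. Completing the
square gives `a(v - uᵢ, v - uᵢ) = a(v, v) - 2 f(v) + f(uᵢ)` for `v ∈ Nᵢ`. Over a decomposition
`∑ᵢ vᵢ = ∑ᵢ uᵢ` the terms in `f` depend only on the common sum, so the total energy is least exactly
where the squares vanish, and its least value is `f(∑ᵢ uᵢ)`. With `f = ⟨S̃⁻¹ λ, ·⟩` and
`uᵢ = Qᵢ S̃⁻¹ λ`, the common sum is `λ`.

The operator `S̃` is injective because `∑ᵢ uᵢ = 0` forces every energy `a(uᵢ, uᵢ)` to vanish, so by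
Cauchy–Schwarz `f` vanishes on each `Nᵢ`, hence on their span `V`.
-/

open scoped RealInnerProductSpace

open LinearMap (BilinForm)

section Galerkin

variable {R V : Type*} [CommRing R] [AddCommGroup V] [Module R V]
  {a : BilinForm R V} {N : Submodule R V} {f : Module.Dual R V} {u v : V}

/-- The vector `u` is a Galerkin solution in the subspace `N` of the variational problem
`a(u, ·) = f`. For `f = ⟨x, ·⟩` it is the local correction `Aᵢ⁻¹ πᵢ x` of the paper, regarded as a
vector of the ambient space so that no coercion from `N` is needed. -/
structure IsGalerkinSolution_s8 (a : BilinForm R V) (N : Submodule R V) (f : Module.Dual R V)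
    (u : V) : Prop where
  mem : u ∈ N
  apply_eq : ∀ v ∈ N, a u v = f v

namespace IsGalerkinSolution_s8

theorem apply_self (h : IsGalerkinSolution_s8 a N f u) : a u u = f u :=
  h.apply_eq u h.mem

theorem apply_sub_self (h : IsGalerkinSolution_s8 a N f u) (ha : (a.restrict N).IsSymm)
    (hv : v ∈ N) : a (v - u) (v - u) = a v v - 2 * f v + f u := by
  have hvu : a v u = f v := (ha.eq ⟨v, hv⟩ ⟨u, h.mem⟩).trans (h.apply_eq v hv)
  simp only [map_sub, LinearMap.sub_apply, hvu, h.apply_eq v hv, h.apply_self]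
  ring

variable [LinearOrder R] [IsStrictOrderedRing R]

theorem two_mul_sub_le_apply_self (h : IsGalerkinSolution_s8 a N f u)
    (ha : (a.restrict N).IsPosSemidef) (hv : v ∈ N) : 2 * f v - f u ≤ a v v := by
  have hsq : 0 ≤ a (v - u) (v - u) := ha.nonneg ⟨v - u, N.sub_mem hv h.mem⟩
  rw [h.apply_sub_self ha.isSymm hv] at hsq
  linarith

theorem apply_eq_zero_of_apply_self_eq_zero (h : IsGalerkinSolution_s8 a N f u)
    (ha : (a.restrict N).IsPosSemidef) (hu : a u u = 0) (hv : v ∈ N) : f v = 0 := by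
  have hker : (⟨u, h.mem⟩ : N) ∈ LinearMap.ker (a.restrict N) :=
    ((a.restrict N).apply_apply_same_eq_zero_iff ha.nonneg
      (LinearMap.BilinForm.isSymm_iff.1 ha.isSymm)).1 hu
  rw [← h.apply_eq v hv]
  exact LinearMap.congr_fun hker ⟨v, hv⟩

end IsGalerkinSolution_s8

end Galerkin

section Decomposition

variable {R V ι : Type*} [CommRing R] [AddCommGroup V] [Module R V] [Fintype ι]

/-- The set of total energies `∑ᵢ a(yᵢ, yᵢ)` of the decompositions `w = ∑ᵢ yᵢ` with `yᵢ ∈ Nᵢ`,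
over which the additive Schwarz identity minimizes. -/
def decompositionEnergies (a : BilinForm R V) (N : ι → Submodule R V) (w : V) : Set R :=
  {s | ∃ y : ι → V, (∀ i, y i ∈ N i) ∧ ∑ i, y i = w ∧ s = ∑ i, a (y i) (y i)}

variable {a : BilinForm R V} {N : ι → Submodule R V} {f : Module.Dual R V} {u : ι → V}

theorem sum_apply_self_of_isGalerkinSolution (hu : ∀ i, IsGalerkinSolution_s8 a (N i) f (u i)) :
    ∑ i, a (u i) (u i) = f (∑ i, u i) := by
  simp only [(hu _).apply_self, map_sum]

variable [LinearOrder R] [IsStrictOrderedRing R]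

theorem isLeast_decompositionEnergies (ha : ∀ i, (a.restrict (N i)).IsPosSemidef)
    (hu : ∀ i, IsGalerkinSolution_s8 a (N i) f (u i)) :
    IsLeast (decompositionEnergies a N (∑ i, u i)) (f (∑ i, u i)) := by
  refine ⟨⟨u, fun i => (hu i).mem, rfl, (sum_apply_self_of_isGalerkinSolution hu).symm⟩, ?_⟩
  rintro _ ⟨y, hy, hsum, rfl⟩
  calc
    f (∑ i, u i) = 2 * f (∑ i, y i) - f (∑ i, u i) := by rw [hsum]; ring
    _ = ∑ i, (2 * f (y i) - f (u i)) := by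
      simp only [map_sum, Finset.mul_sum, Finset.sum_sub_distrib]
    _ ≤ ∑ i, a (y i) (y i) :=
      Finset.sum_le_sum fun i _ => (hu i).two_mul_sub_le_apply_self (ha i) (hy i)

theorem eq_zero_of_sum_isGalerkinSolution_eq_zero (ha : ∀ i, (a.restrict (N i)).IsPosSemidef)
    (hN : ⨆ i, N i = ⊤) (hu : ∀ i, IsGalerkinSolution_s8 a (N i) f (u i)) (hsum : ∑ i, u i = 0) :
    f = 0 := by
  have henergy : ∑ i, a (u i) (u i) = 0 := by
    rw [sum_apply_self_of_isGalerkinSolution hu, hsum, map_zero]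
  have hzero : ∀ i, a (u i) (u i) = 0 := by
    simpa using (Finset.sum_eq_zero_iff_of_nonneg
      fun i _ => (ha i).nonneg ⟨u i, (hu i).mem⟩).1 henergy
  have hker : ⨆ i, N i ≤ LinearMap.ker f := iSup_le fun i _ hv =>
    (hu i).apply_eq_zero_of_apply_self_eq_zero (ha i) (hzero i) hv
  rwa [hN, top_le_iff, LinearMap.ker_eq_top] at hker

end Decomposition

theorem isPosSemidef_restrict_of_pos {R V : Type*} [CommRing R] [Preorder R] [AddCommGroup V]
    [Module R V] {a : BilinForm R V} (hsymm : ∀ u v, a u v = a v u)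
    (hpos : ∀ u, u ≠ 0 → 0 < a u u) (N : Submodule R V) : (a.restrict N).IsPosSemidef where
  eq u v := hsymm u v
  nonneg u := by
    obtain hu | hu := eq_or_ne (u : V) 0
    · simp [hu]
    · exact (hpos u hu).le

theorem subspace_correction_inverse_identity_general
    {K V ι : Type*} [Field K] [LinearOrder K] [IsStrictOrderedRing K]
    [AddCommGroup V] [Module K V] [FiniteDimensional K V] [Fintype ι]
    {a b : BilinForm K V} {N : ι → Submodule K V} {Q : ι → Module.End K V}
    (ha : ∀ i, (a.restrict (N i)).IsPosSemidef) (hb : b.SeparatingLeft) (hN : ⨆ i, N i = ⊤)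
    (hQ : ∀ i x, IsGalerkinSolution_s8 a (N i) (b x) (Q i x)) :
    ∃ T : Module.End K V, T * ∑ i, Q i = 1 ∧ (∑ i, Q i) * T = 1 ∧
      ∀ w, IsLeast (decompositionEnergies a N w) (b (T w) w) := by
  have hker : LinearMap.ker (∑ i, Q i) = ⊥ := LinearMap.ker_eq_bot'.2 fun x hx => by
    rw [LinearMap.sum_apply] at hx
    have hbx : b x = 0 := eq_zero_of_sum_isGalerkinSolution_eq_zero ha hN (fun i => hQ i x) hx
    exact hb x (LinearMap.congr_fun hbx)
  obtain ⟨T, hST, hTS⟩ := isUnit_iff_exists.1 ((LinearMap.isUnit_iff_ker_eq_bot _).2 hker)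
  refine ⟨T, hTS, hST, fun w => ?_⟩
  have hsum : ∑ i, Q i (T w) = w := by
    rw [← LinearMap.sum_apply]
    exact LinearMap.congr_fun hST w
  simpa only [hsum] using isLeast_decompositionEnergies ha fun i => hQ i (T w)

/-- the parallel subspace correction operator `S̃ = Σᵢ ιᵢ Aᵢ⁻¹ πᵢ` is
invertible, and the quadratic form of its inverse equals the (attained) infimum of
the summed energies over all subspace decompositions of `λ`.  Each summand
`Qᵢ = ιᵢ Aᵢ⁻¹ πᵢ` is characterized by `Qᵢ x ∈ Nᵢ` and `a(Qᵢ x, v) = ⟨x, v⟩` for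
`v ∈ Nᵢ`. -/
theorem subspace_correction_inverse_identity
    {V : Type*} [NormedAddCommGroup V] [InnerProductSpace ℝ V] [FiniteDimensional ℝ V]
    {n : ℕ}
    (a : V →ₗ[ℝ] V →ₗ[ℝ] ℝ)
    (ha_symm : ∀ u v : V, a u v = a v u)
    (ha_pd : ∀ u : V, u ≠ 0 → 0 < a u u)
    (N : Fin n → Submodule ℝ V)
    (hN : (⨆ i, N i) = ⊤)
    (Q : Fin n → Module.End ℝ V)
    (hQmem : ∀ i (x : V), Q i x ∈ N i)
    (hQ : ∀ i (x v : V), v ∈ N i → a (Q i x) v = ⟪x, v⟫)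
    (St : Module.End ℝ V) (hSt : St = ∑ i, Q i) :
    ∃ Tinv : Module.End ℝ V, Tinv * St = 1 ∧ St * Tinv = 1 ∧
      ∀ lam : V,
        IsLeast {s : ℝ | ∃ y : Fin n → V, (∀ i, y i ∈ N i) ∧ (∑ i, y i) = lam ∧
          s = ∑ i, a (y i) (y i)} ⟪Tinv lam, lam⟫ := by
  subst hSt
  exact subspace_correction_inverse_identity_general (b := innerₗ V)
    (fun i => isPosSemidef_restrict_of_pos ha_symm ha_pd (N i))
    (fun x hx => inner_self_eq_zero.1 (hx x)) hN fun i x => ⟨hQmem i x, hQ i x⟩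
end
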